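/- Let 𝒮 be an affine subspace of L(U,V) such that either codim 𝒮 ≤ dim V − 3, or codim 𝒮 ≤ dim V − 1 and K has more than 2 elements. Let F : 𝒮 → V be an affine map that is quasi-range-compatible with respect to some 1-dimensional linear subspace D₀ of V; let S be the translation vector space of 𝒮 and F⃗ : S → V the linear part of F. Let D₁ be a 1-dimensional linear subspace of V that is contained in the kernel of every operator of S⊥. Then for every 1-dimensional linear subspace D of V that is different from both D₀ and D₁, and for every s ∈ S with range(s) = D, one has F⃗(s) ∈ D. -/

import Mathlib

attribute [local instance] AffineSubspace.toAddTorsor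

/-!
Suppose `x = F⃗ s` is not in `range s`, choose `d ∈ D₀` outside `range s`, and let `φ` be a linear
form on `V` that vanishes on `range s`, but neither at `x` nor at `d`. An operator `y ∈ 𝒮` with
`φ ∘ y = 0` satisfies `D₀ ⊄ range y`, hence `φ (F y) = 0`; the same applies to `y + s`, so that
`φ x = 0`, which is false. Hence no `y ∈ 𝒮` satisfies `φ ∘ y = 0`, so `r ↦ φ ∘ r` does not map `S`
onto `U*`, and by duality `S⊥` contains an operator `v ↦ φ v • u` with `u ≠ 0`.

If `K` has more than two elements, `φ` can be chosen not to vanish on `D₁`, and neither does the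
operator `v ↦ φ v • u` then. Over any field, such forms `φ` span a space of dimension at least
`dim V - rank s - 1`, and linearly independent ones yield linearly independent elements of `S⊥`;
therefore `codim 𝒮 ≥ dim V - rank s - 1`.
-/

open Module

section LinearForms

variable {K V : Type*} [Field K] [AddCommGroup V] [Module K V]

theorem exists_mem_dualAnnihilator_forall_apply_ne_zero (D : Submodule K V) (A : Finset V)
    (hA : ∀ a ∈ A, a ∉ D) (hcard : (A.card : Cardinal) ≤ Cardinal.mk K) :
    ∃ φ ∈ D.dualAnnihilator, ∀ a ∈ A, φ a ≠ 0 := by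
  classical
  induction A using Finset.induction_on with
  | empty => exact ⟨0, zero_mem _, by simp⟩
  | insert b A hb ih =>
    rw [Finset.card_insert_of_notMem hb, Nat.cast_add_one, Cardinal.natCast_add_one_le_iff] at hcard
    rw [Finset.forall_mem_insert] at hA
    obtain ⟨φ, hφD, hφA⟩ := ih hA.2 hcard.le
    by_cases hφb : φ b = 0
    · obtain ⟨ψ, hψb, hψD⟩ := Submodule.exists_le_ker_of_notMem hA.1
      -- For each `a ∈ A`, exactly one scalar `c` makes `ψ + c • φ` vanish at `a`.
      obtain ⟨c, hc⟩ : ∃ c : K, c ∉ A.image fun a ↦ -ψ a / φ a := by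
        refine Cardinal.compl_nonempty_of_mk_lt_mk (S := (A.image fun a ↦ -ψ a / φ a : Set K)) ?_
        exact Cardinal.mk_coe_finset.trans_lt <| (Nat.cast_le.2 Finset.card_image_le).trans_lt hcard
      refine ⟨ψ + c • φ, ?_, (Finset.forall_mem_insert ..).2 ⟨by simpa [hφb], fun a ha h ↦ ?_⟩⟩
      · exact add_mem ((Submodule.mem_dualAnnihilator ψ).2 hψD) (Submodule.smul_mem _ c hφD)
      · refine hc (Finset.mem_image.2 ⟨a, ha, ?_⟩)
        rw [div_eq_iff (hφA a ha)]
        exact neg_eq_of_add_eq_zero_right h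
    · exact ⟨φ, hφD, (Finset.forall_mem_insert ..).2 ⟨hφb, hφA⟩⟩

/-- The linear forms that separate `D` from both `a` and `b`: those that vanish on `D`, but neither
at `a` nor at `b`. They are the forms to which quasi-range-compatibility is applied, with `D` the
range of an operator. -/
def separatingForms (D : Submodule K V) (a b : V) : Set (Dual K V) :=
  {φ | φ ∈ D.dualAnnihilator ∧ φ a ≠ 0 ∧ φ b ≠ 0}

variable {D : Submodule K V} {a b : V}

theorem separatingForms_nonempty (ha : a ∉ D) (hb : b ∉ D) : (separatingForms D a b).Nonempty := by
  classical
  have hcard : ((({a, b} : Finset V).card : ℕ) : Cardinal) ≤ Cardinal.mk K :=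
    (Nat.cast_le.2 Finset.card_le_two).trans
      (Cardinal.two_le_iff.2 ⟨(0 : K), 1, zero_ne_one⟩)
  obtain ⟨φ, hφD, hφ⟩ :=
    exists_mem_dualAnnihilator_forall_apply_ne_zero D {a, b} (by simp [ha, hb]) hcard
  exact ⟨φ, hφD, hφ a (by simp), hφ b (by simp)⟩

theorem add_mem_separatingForms {φ ψ : Dual K V} (hφ : φ ∈ separatingForms D a b)
    (hψ : ψ ∈ (D ⊔ Submodule.span K {a, b}).dualAnnihilator) : ψ + φ ∈ separatingForms D a b := by
  have hψ_apply {v : V} (hv : v ∈ ({a, b} : Set V)) : ψ v = 0 :=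
    (Submodule.mem_dualAnnihilator ψ).1 hψ v (Submodule.mem_sup_right (Submodule.subset_span hv))
  exact ⟨add_mem (Submodule.dualAnnihilator_anti le_sup_left hψ) hφ.1,
    by simpa [hψ_apply] using hφ.2.1, by simpa [hψ_apply] using hφ.2.2⟩

theorem finrank_le_finrank_span_separatingForms [FiniteDimensional K V] (ha : a ∉ D) (hb : b ∉ D) :
    finrank K V ≤ finrank K D + 1 + finrank K (Submodule.span K (separatingForms D a b)) := by
  classical
  obtain ⟨φ, hφ⟩ := separatingForms_nonempty ha hb
  have hφ_mem := Submodule.subset_span (R := K) hφ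
  let E := D ⊔ Submodule.span K {a, b}
  have hφE : φ ∉ E.dualAnnihilator := fun h ↦ hφ.2.1 <|
    (Submodule.mem_dualAnnihilator φ).1 h a <| Submodule.mem_sup_right <|
      Submodule.subset_span (by simp)
  have hspan : E.dualAnnihilator ⊔ K ∙ φ ≤ Submodule.span K (separatingForms D a b) := by
    refine sup_le (fun ψ hψ ↦ ?_) ((Submodule.span_singleton_le_iff_mem _ _).2 hφ_mem)
    simpa using sub_mem (Submodule.subset_span (add_mem_separatingForms hφ hψ)) hφ_mem
  have hle := Submodule.finrank_mono hspan
  rw [Submodule.finrank_sup_span_singleton hφE] at hle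
  have hE : finrank K E ≤ finrank K D + finrank K (Submodule.span K {a, b}) :=
    Submodule.finrank_add_le_finrank_add_finrank _ _
  have hab : finrank K (Submodule.span K {a, b}) ≤ 2 := by
    rw [← Finset.coe_pair]
    exact (finrank_span_finset_le_card _).trans Finset.card_le_two
  have := Subspace.finrank_add_finrank_dualAnnihilator_eq E
  lia

end LinearForms

section RankOne

variable {K U V : Type*} [Field K] [AddCommGroup U] [Module K U] [AddCommGroup V] [Module K V]

theorem linearIndependent_smulRight {ι : Type*} {φ : ι → Dual K V} (hφ : LinearIndependent K φ)
    {u : ι → U} (hu : ∀ i, u i ≠ 0) : LinearIndependent K fun i ↦ (φ i).smulRight (u i) := by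
  rw [linearIndependent_iff'] at hφ ⊢
  intro s c hsum i hi
  obtain ⟨g, hg⟩ : ∃ g : Dual K U, g (u i) ≠ 0 := by
    simpa [hu i] using (forall_dual_apply_eq_zero_iff K (u i)).not
  refine (mul_eq_zero.1 (hφ s (fun j ↦ c j * g (u j)) ?_ i hi)).resolve_right hg
  ext v
  simpa [mul_assoc, mul_comm] using congr(g ($hsum v))

theorem finrank_span_le_of_forall_exists_smulRight_mem {T : Submodule K (V →ₗ[K] U)}
    [FiniteDimensional K T] {A : Set (Dual K V)}
    (hA : ∀ φ ∈ A, ∃ u ≠ 0, φ.smulRight u ∈ T) :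
    finrank K (Submodule.span K A) ≤ finrank K T := by
  obtain ⟨B, hBA, hspan, hB⟩ := exists_linearIndependent K A
  choose u hu hT using fun φ : B ↦ hA φ (hBA φ.2)
  have hindep : LinearIndependent K fun φ : B ↦ (⟨φ.1.smulRight (u φ), hT φ⟩ : T) :=
    .of_comp T.subtype (linearIndependent_smulRight hB hu)
  have : Fintype B := @Fintype.ofFinite B hindep.finite_of_isNoetherian
  rw [← hspan, finrank_span_set_eq_card hB, Set.toFinset_card]
  exact hindep.fintype_card_le_finrank

end RankOne

section TraceOrthogonal

variable {K U V : Type*} [Field K] [AddCommGroup U] [Module K U] [AddCommGroup V] [Module K V]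

variable (K U V) in
/-- The trace pairing `t ↦ (s ↦ tr (t ∘ s))` between `L(V,U)` and `L(U,V)`. -/
noncomputable def tracePairing : (V →ₗ[K] U) →ₗ[K] Dual K (U →ₗ[K] V) :=
  (LinearMap.llcomp K U V U).compr₂ (LinearMap.trace K U)

/-- The orthogonal `S⊥` of `S ⊆ L(U,V)` for the trace pairing, as a subspace of `L(V,U)`. -/
noncomputable def traceOrthogonal (S : Submodule K (U →ₗ[K] V)) : Submodule K (V →ₗ[K] U) :=
  S.dualAnnihilator.comap (tracePairing K U V)

theorem mem_traceOrthogonal {S : Submodule K (U →ₗ[K] V)} {t : V →ₗ[K] U} :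
    t ∈ traceOrthogonal S ↔ ∀ s ∈ S, LinearMap.trace K U (t ∘ₗ s) = 0 :=
  Submodule.mem_dualAnnihilator _

variable [FiniteDimensional K U]

theorem smulRight_mem_traceOrthogonal {S : Submodule K (U →ₗ[K] V)} {φ : Dual K V} {u : U} :
    φ.smulRight u ∈ traceOrthogonal S ↔ ∀ s ∈ S, φ (s u) = 0 := by
  have htrace (s : U →ₗ[K] V) : LinearMap.trace K U (φ.smulRight u ∘ₗ s) = φ (s u) :=
    LinearMap.trace_smulRight (φ ∘ₗ s) u
  simp only [mem_traceOrthogonal, htrace]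

theorem tracePairing_injective : Function.Injective (tracePairing K U V) := by
  refine (injective_iff_map_eq_zero _).2 fun t ht ↦ LinearMap.ext fun v ↦ ?_
  refine (forall_dual_apply_eq_zero_iff K (t v)).1 fun g ↦ ?_
  have htrace : LinearMap.trace K U (t ∘ₗ g.smulRight v) = g (t v) := by
    rw [← LinearMap.trace_smulRight g (t v)]
    congr 1
    ext u
    simp
  exact htrace.symm.trans (LinearMap.congr_fun ht (g.smulRight v))

theorem finrank_traceOrthogonal_le (S : Submodule K (U →ₗ[K] V))
    [FiniteDimensional K ((U →ₗ[K] V) ⧸ S)] :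
    finrank K (traceOrthogonal S) ≤ finrank K ((U →ₗ[K] V) ⧸ S) := by
  have : FiniteDimensional K S.dualAnnihilator := Module.Finite.equiv S.dualQuotEquivDualAnnihilator
  rw [← Subspace.dual_finrank_eq (V := (U →ₗ[K] V) ⧸ S), S.dualQuotEquivDualAnnihilator.finrank_eq]
  exact LinearMap.finrank_le_finrank_of_injective
    (f := (tracePairing K U V).restrict fun _ ht ↦ ht) fun _ _ h ↦
      Subtype.ext (tracePairing_injective congr(($h).1))

theorem exists_smulRight_mem_traceOrthogonal_of_map_ne_top {S : Submodule K (U →ₗ[K] V)}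
    {φ : Dual K V} (hS : S.map (LinearMap.compRight K φ) ≠ ⊤) :
    ∃ u ≠ 0, φ.smulRight u ∈ traceOrthogonal S := by
  obtain ⟨f, hf, hker⟩ := Submodule.exists_le_ker_of_lt_top _ hS.lt_top
  obtain ⟨u, rfl⟩ := (evalEquiv K U).surjective f
  exact ⟨u, fun hu ↦ hf (by rw [hu, map_zero]), smulRight_mem_traceOrthogonal.2 fun s hs ↦
    hker (Submodule.mem_map_of_mem hs)⟩

end TraceOrthogonal

section QuasiRangeCompatible

variable {K U V : Type*} [Field K] [AddCommGroup U] [Module K U] [AddCommGroup V] [Module K V]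

/-- `F : 𝒮 → V` is quasi-range-compatible with respect to `D` if `F s ∈ range s` for every `s ∈ 𝒮`
whose range does not include `D`. The subspace `D` may have any dimension here. -/
def QuasiRangeCompatible {𝒮 : Set (U →ₗ[K] V)} (D : Submodule K V) (F : 𝒮 → V) : Prop :=
  ∀ s : 𝒮, ¬ D ≤ LinearMap.range s.1 → F s ∈ LinearMap.range s.1

namespace QuasiRangeCompatible

theorem apply_eq_zero_of_comp_eq_zero {𝒮 : Set (U →ₗ[K] V)} {D : Submodule K V} {F : 𝒮 → V}
    (hF : QuasiRangeCompatible D F) {φ : Dual K V} {d : V} (hd : d ∈ D) (hφd : φ d ≠ 0) {y : 𝒮}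
    (hy : φ ∘ₗ y.1 = 0) : φ (F y) = 0 := by
  have hrange : LinearMap.range y.1 ≤ LinearMap.ker φ := LinearMap.range_le_ker_iff.2 hy
  exact hrange (hF y fun hD ↦ hφd (hrange (hD hd)))

variable [FiniteDimensional K U] {𝒮 : AffineSubspace K (U →ₗ[K] V)} [Nonempty 𝒮]
  {D : Submodule K V} {F : 𝒮 →ᵃ[K] V} {s : 𝒮.direction}

theorem exists_smulRight_mem_traceOrthogonal (hF : QuasiRangeCompatible D F) {d : V} (hd : d ∈ D)
    {φ : Dual K V} (hφ : φ ∈ separatingForms (LinearMap.range s.1) (F.linear s) d) :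
    ∃ u ≠ 0, φ.smulRight u ∈ traceOrthogonal 𝒮.direction := by
  obtain ⟨hφs, hφF, hφd⟩ := hφ
  refine exists_smulRight_mem_traceOrthogonal_of_map_ne_top fun htop ↦ hφF ?_
  obtain ⟨y₀⟩ := ‹Nonempty 𝒮›
  obtain ⟨r, hr, hφr⟩ : -(φ ∘ₗ y₀.1) ∈ 𝒮.direction.map (LinearMap.compRight K φ) :=
    htop ▸ Submodule.mem_top
  let y : 𝒮 := (⟨r, hr⟩ : 𝒮.direction) +ᵥ y₀
  have hy : φ ∘ₗ y.1 = 0 := by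
    change φ ∘ₗ (r + y₀.1) = 0
    rw [LinearMap.comp_add, ← LinearMap.compRight_apply K, hφr, neg_add_cancel]
  have hsy : φ ∘ₗ (s +ᵥ y).1 = 0 := by
    change φ ∘ₗ (s.1 + y.1) = 0
    rw [LinearMap.comp_add, hy, add_zero]
    exact LinearMap.range_le_ker_iff.1 ((Submodule.mem_dualAnnihilator φ).1 hφs)
  have hFy := hF.apply_eq_zero_of_comp_eq_zero hd hφd hy
  have hFsy := hF.apply_eq_zero_of_comp_eq_zero hd hφd hsy
  rw [F.map_vadd, vadd_eq_add, map_add, hFy, add_zero] at hFsy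
  exact hFsy

theorem linear_mem_range_of_two_lt_card (hF : QuasiRangeCompatible D F) (hK : 2 < Cardinal.mk K)
    (hD : ¬ D ≤ LinearMap.range s.1) {D' : Submodule K V} (hD' : ¬ D' ≤ LinearMap.range s.1)
    (hker : ∀ t ∈ traceOrthogonal 𝒮.direction, D' ≤ LinearMap.ker t) :
    F.linear s ∈ LinearMap.range s.1 := by
  classical
  by_contra hFs
  obtain ⟨d, hd, hds⟩ := SetLike.not_le_iff_exists.1 hD
  obtain ⟨d', hd', hds'⟩ := SetLike.not_le_iff_exists.1 hD'
  have hcard : ((({F.linear s, d, d'} : Finset V).card : ℕ) : Cardinal) ≤ Cardinal.mk K := by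
    have hK3 := (Cardinal.natCast_add_one_le_iff (n := 2)).2 hK
    exact (Nat.cast_le.2 Finset.card_le_three).trans (by exact_mod_cast hK3)
  obtain ⟨φ, hφs, hφ⟩ := exists_mem_dualAnnihilator_forall_apply_ne_zero
    (LinearMap.range s.1) {F.linear s, d, d'} (by simp [hFs, hds, hds', -LinearMap.mem_range]) hcard
  obtain ⟨u, hu, hφu⟩ :=
    hF.exists_smulRight_mem_traceOrthogonal hd ⟨hφs, hφ _ (by simp), hφ d (by simp)⟩
  exact smul_ne_zero (hφ d' (by simp)) hu (hker _ hφu hd')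

theorem linear_mem_range_of_codim_le (hF : QuasiRangeCompatible D F)
    (hD : ¬ D ≤ LinearMap.range s.1)
    (hcodim : finrank K ((U →ₗ[K] V) ⧸ 𝒮.direction) + finrank K (LinearMap.range s.1) + 2 ≤
      finrank K V) :
    F.linear s ∈ LinearMap.range s.1 := by
  have : FiniteDimensional K V := .of_finrank_pos (by lia)
  by_contra hFs
  obtain ⟨d, hd, hds⟩ := SetLike.not_le_iff_exists.1 hD
  have hforms := finrank_le_finrank_span_separatingForms hFs hds
  have hrankOne := finrank_span_le_of_forall_exists_smulRight_mem
    fun _ ↦ hF.exists_smulRight_mem_traceOrthogonal (s := s) hd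
  have horth := finrank_traceOrthogonal_le 𝒮.direction
  lia

end QuasiRangeCompatible

end QuasiRangeCompatible

theorem linear_part_maps_rank_one_into_range_general {K U V : Type*} [Field K]
    [AddCommGroup U] [Module K U] [FiniteDimensional K U] [AddCommGroup V] [Module K V]
    {𝒮 : AffineSubspace K (U →ₗ[K] V)} [Nonempty 𝒮] {F : 𝒮 →ᵃ[K] V}
    {D₀ D₁ : Submodule K V} (hF : QuasiRangeCompatible D₀ F) (s : 𝒮.direction)
    (hD₀ : ¬ D₀ ≤ LinearMap.range s.1)
    (h : finrank K ((U →ₗ[K] V) ⧸ 𝒮.direction) + finrank K (LinearMap.range s.1) + 2 ≤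
        finrank K V ∨
      2 < Cardinal.mk K ∧ ¬ D₁ ≤ LinearMap.range s.1 ∧
        ∀ t ∈ traceOrthogonal 𝒮.direction, D₁ ≤ LinearMap.ker t) :
    F.linear s ∈ LinearMap.range s.1 := by
  rcases h with hcodim | ⟨hK, hD₁, hker⟩
  · exact hF.linear_mem_range_of_codim_le hD₀ hcodim
  · exact hF.linear_mem_range_of_two_lt_card hK hD₀ hD₁ hker

/-- Let `𝒮` be an affine subspace of `L(U,V)` such that either
`codim 𝒮 ≤ dim V − 3`, or `codim 𝒮 ≤ dim V − 1` and `K` has more than 2 elements.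
Let `F : 𝒮 → V` be an affine map that is quasi-range-compatible with respect to some
1-dimensional linear subspace `D₀` of `V`, let `S = 𝒮.direction` and `F⃗ = F.linear`.
Let `D₁` be a 1-dimensional linear subspace of `V` contained in the kernel of every
operator of `S⊥` (membership `t ∈ S⊥` expressed via the trace form). Then for every
1-dimensional subspace `D` of `V` different from `D₀` and `D₁` and every `s ∈ S` with
`range s = D`, one has `F⃗ s ∈ D`. -/
theorem linear_part_maps_rank_one_into_range
    (K U V : Type*) [Field K]
    [AddCommGroup U] [Module K U] [FiniteDimensional K U]
    [AddCommGroup V] [Module K V] [FiniteDimensional K V]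
    (𝒮 : AffineSubspace K (U →ₗ[K] V)) [Nonempty ↥𝒮]
    (hcodim : (Module.finrank K (U →ₗ[K] V) + 3 ≤
        Module.finrank K 𝒮.direction + Module.finrank K V) ∨
      (Module.finrank K (U →ₗ[K] V) + 1 ≤
        Module.finrank K 𝒮.direction + Module.finrank K V ∧ 2 < Cardinal.mk K))
    (F : ↥𝒮 →ᵃ[K] V)
    (D₀ : Submodule K V) (hD₀ : Module.finrank K D₀ = 1)
    (hq : ∀ s : ↥𝒮, ¬ D₀ ≤ LinearMap.range (s : U →ₗ[K] V) →
      F s ∈ LinearMap.range (s : U →ₗ[K] V))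
    (D₁ : Submodule K V) (hD₁ : Module.finrank K D₁ = 1)
    (hker : ∀ t : V →ₗ[K] U,
      (∀ s ∈ 𝒮.direction, LinearMap.trace K U (t ∘ₗ s) = 0) →
      D₁ ≤ LinearMap.ker t) :
    ∀ D : Submodule K V, Module.finrank K D = 1 → D ≠ D₀ → D ≠ D₁ →
      ∀ s : ↥𝒮.direction, LinearMap.range (s : U →ₗ[K] V) = D →
        F.linear s ∈ D := by
  rintro _ hD hDD₀ hDD₁ s rfl
  have not_le {D : Submodule K V} (hD' : finrank K D = 1) (hne : LinearMap.range s.1 ≠ D) :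
      ¬ D ≤ LinearMap.range s.1 := fun hle ↦
    hne (Submodule.eq_of_le_of_finrank_eq hle (hD'.trans hD.symm)).symm
  refine linear_part_maps_rank_one_into_range_general (D₁ := D₁) hq s (not_le hD₀ hDD₀) ?_
  have hquot := 𝒮.direction.finrank_quotient_add_finrank
  exact hcodim.imp (fun _ ↦ by lia) fun ⟨_, hK⟩ ↦
    ⟨hK, not_le hD₁ hDD₁, fun t ht ↦ hker t (mem_traceOrthogonal.1 ht)⟩
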